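/- Assume that there exist two sequences (σ'_n) and (σ_n) of Radon measures on X^d and a sequence (S_n) of twisting transformations satisfying: σ_n → σ, σ'_n → σ (in the sense of convergence of Radon measures on X^d), and for each m ≥ 0 and all n large enough (depending on m), σ'_n(S_n^{−1}B) = σ_n(B) for every m-box B contained in Ω_m. Then there exists a twisting transformation S such that σ is S-invariant. -/

import Mathlib

/-!
Since there are finitely many twisting transformations, one of them, `S`, equals `S_n` for
infinitely many `n`. If `B` is an `m`-box contained in `Ω_m`, then `S⁻¹ B` is also an `m`-box
(`isNBox_tw_preimage`), so along these `n` both convergences apply to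
`σ'_n(S⁻¹ B) = σ_n(B)`. As the two normalizing factors may differ, the limit only says that
`σ(S⁻¹ B) / σ(B)` does not depend on the `m`-box `B ⊆ Ω_m`. The sets `Ω_m` increase to the
complement of the hyperplanes `y_i = 𝟎`, which are null because `𝟎` is not in the range of `T`;
hence `σ(S⁻¹ A) = c σ(A)` for all measurable `A` and some constant `c < ∞` (`ext_of_boxes`).

It remains to see that `c = 1`. The complementary twist `S'` satisfies `S S' = T^{×d}`, so if
`c ≠ 0` it multiplies `σ` by `c⁻¹`, and it suffices to exclude `c < 1` (`no_contraction`). Let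
`n = n_ℓ - ℓ`. Between the steps `n` and `n_ℓ` only isolated spacers are inserted. If `x_i` lies
in `C_n`, outside the last occurrence of tower `n` in tower `n_ℓ`, then `T^{h_n}` brings it to
the next occurrence of tower `n`, at the same level or one level below; if moreover `x_i` is in a
nonzero level of tower `m`, with `m ≤ n`, then `T^{h_n} x_i` is still in `C_m` (`T_iter_hgt`).
By the definition of `X_∞`, for every `ℓ ≥ L` large enough the points `x ∈ Ω_m` with
`ℓ(x_i) ≤ L` for all `i` therefore lie in `S^{-h_n} C_m^d`, which has measure `c^{h_n} σ(C_m^d)`.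
This tends to `0`, so these points form a null set; letting `L` and `m` vary, `σ = 0`, a
contradiction.
-/


open MeasureTheory Set Filter Topology
open scoped ENNReal
open scoped Classical

noncomputable section

/-! ## The nearly finite Chacon transformation: symbolic model -/

/-- The alphabet `{*} ∪ ℕ` is modelled by `Option ℕ`, `none` playing the role of `*`. -/
instance optionNatTop : TopologicalSpace (Option ℕ) := ⊥

/-- The data of the two sequences `(n_ℓ)` and `(ℓ_k)` used in the construction of the
nearly finite Chacon transformation, together with the growth conditions imposed on them. -/
structure NFCseq where
  nseq : ℕ → ℕ
  lseq : ℕ → ℕ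
  nseq_zero : nseq 0 = 0
  lseq_zero : lseq 0 = 1
  lseq_strictMono : StrictMono lseq
  nseq_growth : ∀ ℓ : ℕ, 1 ≤ ℓ → nseq (ℓ - 1) + 2 * ℓ < nseq ℓ
  lseq_growth : ∀ k : ℕ, (2 : ℝ) ≤ (1 + ((7 : ℝ) ^ k)⁻¹) ^ (lseq (k + 1) - lseq k)

namespace NFCseq

/-- `k(ℓ)`: the unique `k` with `ℓ_k ≤ ℓ < ℓ_{k+1}`. -/
def kOf (P : NFCseq) (ℓ : ℕ) : ℕ := sSup {k | P.lseq k ≤ ℓ}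

/-- The heights `h_n` of the towers. -/
def hgt (P : NFCseq) : ℕ → ℕ
  | 0 => 1
  | n + 1 =>
    3 * P.hgt n +
      3 * (if hn : ∃ ℓ, 1 ≤ ℓ ∧ P.nseq ℓ = n then P.hgt (n - P.kOf (Nat.find hn)) else 0) + 1
termination_by n => n
decreasing_by all_goals omega

theorem hgt_pos (P : NFCseq) (n : ℕ) : 0 < P.hgt n := by
  cases n with
  | zero => simp [hgt]
  | succ n => rw [hgt]; omega

/-- The number of spacers put above the first subcolumn at step `n+1`
(`h_{n-k(ℓ)}` if `n = n_ℓ`, and `0` otherwise). -/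
def spa (P : NFCseq) (n : ℕ) : ℕ :=
  if hn : ∃ ℓ, 1 ≤ ℓ ∧ P.nseq ℓ = n then P.hgt (n - P.kOf (Nat.find hn)) else 0

/-- The map `p_n` sending the index of a level of tower `n+1` to the index of the level of
tower `n` containing it (`none` if that level lies outside tower `n`). -/
def pmap (P : NFCseq) (n j : ℕ) : Option ℕ :=
  if j < P.hgt n then some j
  else if j < P.hgt n + P.spa n then none
  else if j < 2 * P.hgt n + P.spa n then some (j - (P.hgt n + P.spa n))
  else if j < 2 * P.hgt n + 2 * P.spa n + 1 then none
  else if j < 3 * P.hgt n + 2 * P.spa n + 1 then some (j - (2 * P.hgt n + 2 * P.spa n + 1))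
  else none

/-- The defining property of points of the space `X`. -/
def Xspec (P : NFCseq) (x : ℕ → Option ℕ) : Prop :=
  (∀ n, x n = (x (n + 1)).bind (P.pmap n)) ∧ ∃ n, x n ≠ none

/-- The space `X` of the symbolic model, with its product (subspace) topology. -/
abbrev Xpt (P : NFCseq) : Type := {x : ℕ → Option ℕ // P.Xspec x}

instance (P : NFCseq) : MeasurableSpace P.Xpt := borel _

/-- `L_n^j`, the `j`-th level of tower `n`. -/
def level (P : NFCseq) (n j : ℕ) : Set P.Xpt := {x | x.1 n = some j}

/-- `C_n`, the union of all levels of tower `n`. -/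
def tower (P : NFCseq) (n : ℕ) : Set P.Xpt := {x | x.1 n ≠ none}

theorem pmap_zero (P : NFCseq) (n : ℕ) : P.pmap n 0 = some 0 := by
  unfold pmap
  simp [P.hgt_pos n]

/-- The point `𝟎 = (0,0,…)`. -/
def zeroPt (P : NFCseq) : P.Xpt :=
  ⟨fun _ => some 0, fun n => by
    show some 0 = (some 0).bind (P.pmap n)
    simp [P.pmap_zero n], 0, by simp⟩

/-- `t_n(x) ∈ {1,2,3}`: the subcolumn of tower `n` to which `x` belongs
(junk value `0` if `x` is not in tower `n+1`). -/
def tcol (P : NFCseq) (n : ℕ) (x : P.Xpt) : ℕ :=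
  match x.1 (n + 1) with
  | none => 0
  | some j =>
    if j < P.hgt n + P.spa n then 1
    else if j < 2 * P.hgt n + 2 * P.spa n + 1 then 2
    else 3

/-- The index (from `0` to `3^(m-n) - 1`, ordered from bottom to top of tower `m`) of the
occurrence of tower `n` inside tower `m` to which `x` belongs. -/
def occIdx (P : NFCseq) (n m : ℕ) (x : P.Xpt) : ℕ :=
  ∑ r ∈ Finset.Ico n m, (P.tcol r x - 1) * 3 ^ (r - n)

/-- `x` belongs to one of the first hundred occurrences of tower `n` inside tower `m`. -/
def inFirstHundred (P : NFCseq) (n m : ℕ) (x : P.Xpt) : Prop := P.occIdx n m x < 100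

/-- `x` belongs to one of the last hundred occurrences of tower `n` inside tower `m`. -/
def inLastHundred (P : NFCseq) (n m : ℕ) (x : P.Xpt) : Prop :=
  3 ^ (m - n) ≤ P.occIdx n m x + 100

end NFCseq

/-- The nearly finite Chacon transformation `T` together with its invariant measure `μ`. -/
structure NFC extends NFCseq where
  T : toNFCseq.Xpt → toNFCseq.Xpt
  μ : Measure toNFCseq.Xpt
  T_inj : Function.Injective T
  T_range : Set.range T = {toNFCseq.zeroPt}ᶜ
  T_up : ∀ x : toNFCseq.Xpt, ∃ N : ℕ, ∀ n, N ≤ n →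
    ∃ j : ℕ, x.1 n = some j ∧ (T x).1 n = some (j + 1)
  T_meas : Measurable T
  μ_level : ∀ n j : ℕ, j < toNFCseq.hgt n →
    μ (toNFCseq.level n j) = (3 : ℝ≥0∞)⁻¹ ^ n
  μ_pres : MeasurePreserving T μ μ
  μ_sfin : SigmaFinite μ

namespace NFC

/-- `X^d`. -/
abbrev Xd (S : NFC) (d : ℕ) : Type := Fin d → S.toNFCseq.Xpt

/-- The Cartesian power `T^{×d}`. -/
def Td (S : NFC) (d : ℕ) : S.Xd d → S.Xd d := fun y i => S.T (y i)

/-- `C_n^d`. -/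
def towerD (S : NFC) (d n : ℕ) : Set (S.Xd d) := {y | ∀ i, y i ∈ S.toNFCseq.tower n}

/-- `B` is an `n`-box. -/
def IsNBox (S : NFC) (d n : ℕ) (B : Set (S.Xd d)) : Prop :=
  ∃ v : Fin d → ℕ, (∀ i, v i < S.toNFCseq.hgt n) ∧
    B = {y : S.Xd d | ∀ i, y i ∈ S.toNFCseq.level n (v i)}

/-- A measure on `X^d` is Radon iff it is finite on each `C_n^d`. -/
def IsRadon (S : NFC) (d : ℕ) (σ : Measure (S.Xd d)) : Prop :=
  ∀ n, σ (S.towerD d n) < ⊤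

/-- `σ` is `T^{×d}`-invariant. -/
def InvariantD (S : NFC) (d : ℕ) (σ : Measure (S.Xd d)) : Prop :=
  ∀ A : Set (S.Xd d), MeasurableSet A → σ ((S.Td d) ⁻¹' A) = σ A

/-- `T^{-e} A`, the preimage of `A` under `T^e` for `e ∈ ℤ` (image for negative `e`). -/
def preT (S : NFC) : ℤ → Set S.toNFCseq.Xpt → Set S.toNFCseq.Xpt
  | Int.ofNat k, A => S.T^[k] ⁻¹' A
  | Int.negSucc k, A => S.T^[k + 1] '' A

/-- `σ` is a graph measure arising from powers of `T` on `X^ι`: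
`σ(∏ᵢ Aᵢ) = α · μ(⋂ᵢ T^{-eᵢ} Aᵢ)`. -/
def IsGraphMeasure (S : NFC) {ι : Type} (σ : Measure (ι → S.toNFCseq.Xpt)) : Prop :=
  ∃ α : ℝ≥0∞, 0 < α ∧ α ≠ ⊤ ∧ ∃ e : ι → ℤ,
    ∀ A : ι → Set S.toNFCseq.Xpt, (∀ i, MeasurableSet (A i)) →
      σ (Set.univ.pi A) = α * S.μ (⋂ i, S.preT (e i) (A i))

/-- `σ = σ^{D_1} ⊗ ⋯ ⊗ σ^{D_r}` for a partition `D_1, …, D_r` of `{1,…,d}` where each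
`σ^{D_j}` is a graph measure on `X^{D_j}` arising from powers of `T`. -/
def IsProductOfGraphMeasures (S : NFC) (d : ℕ) (σ : Measure (S.Xd d)) : Prop :=
  ∃ (r : ℕ) (D : Fin r → Finset (Fin d)),
    (∀ j, (D j).Nonempty) ∧
    (∀ j j', j ≠ j' → Disjoint (D j) (D j')) ∧
    (∀ i : Fin d, ∃ j, i ∈ D j) ∧
    ∃ σD : ∀ j : Fin r, Measure ({i // i ∈ D j} → S.toNFCseq.Xpt),
      (∀ j, S.IsGraphMeasure (σD j)) ∧
      ∀ A : Fin d → Set S.toNFCseq.Xpt, (∀ i, MeasurableSet (A i)) →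
        σ (Set.univ.pi A) =
          ∏ j : Fin r, σD j (Set.univ.pi fun i : {i // i ∈ D j} => A i.1)

end NFC


/-- `(T)^j W` for `j ∈ ℤ`: forward images for `j ≥ 0`, preimages for `j < 0`. -/
def iterZ {α : Type*} (f : α → α) : ℤ → Set α → Set α
  | Int.ofNat k, A => f^[k] '' A
  | Int.negSucc k, A => f^[k + 1] ⁻¹' A

namespace NFC

/-- `σ` is totally dissipative: there is a wandering set `W` whose `ℤ`-orbit covers
`X^d` up to a `σ`-null set. -/
def TotallyDissipative (S : NFC) (d : ℕ) (σ : Measure (S.Xd d)) : Prop :=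
  ∃ W : Set (S.Xd d), MeasurableSet W ∧
    (∀ j j' : ℤ, j ≠ j' → Disjoint (iterZ (S.Td d) j W) (iterZ (S.Td d) j' W)) ∧
    σ (⋃ j : ℤ, iterZ (S.Td d) j W)ᶜ = 0

/-- The ring `𝓡` of finite unions of `n`-boxes. -/
def BoxRing (S : NFC) (d : ℕ) : Set (Set (S.Xd d)) :=
  {B | ∃ n : ℕ, ∃ 𝔅 : Finset (Set (S.Xd d)), (∀ b ∈ 𝔅, S.IsNBox d n b) ∧ B = ⋃₀ ↑𝔅}

/-- Convergence of a sequence of Radon measures on `X^d`. -/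
def RTendsto (S : NFC) (d : ℕ) (σk : ℕ → Measure (S.Xd d)) (σ : Measure (S.Xd d)) : Prop :=
  ∀ n : ℕ, 0 < σ (S.towerD d n) →
    (∀ᶠ k in atTop, 0 < σk k (S.towerD d n)) ∧
    ∀ B : Set (S.Xd d), S.IsNBox d n B →
      Tendsto (fun k => σk k B / σk k (S.towerD d n)) atTop
        (𝓝 (σ B / σ (S.towerD d n)))

/-- The edge `∂C_n^d` of `C_n^d`. -/
def edgeD (S : NFC) (d n : ℕ) : Set (S.Xd d) :=
  {y | y ∈ S.towerD d n ∧ ∃ i, y i ∈ S.toNFCseq.level n 0 ∨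
    y i ∈ S.toNFCseq.level n (S.toNFCseq.hgt n - 1)}

/-- `Ω_m`: the union of all `m`-boxes `L_m^{j_1} × ⋯ × L_m^{j_d}` with `j_i ≠ 0` for all `i`. -/
def OmegaD (S : NFC) (d m : ℕ) : Set (S.Xd d) :=
  {y | ∀ i, ∃ j : ℕ, j ≠ 0 ∧ j < S.toNFCseq.hgt m ∧ y i ∈ S.toNFCseq.level m j}

/-- A twisting transformation on `X^d`: it applies `T` to the coordinates in a nonempty
proper subset `G_1 ⊆ {1,…,d}` and the identity to the others. -/
def IsTwist (S : NFC) (d : ℕ) (Sw : S.Xd d → S.Xd d) : Prop :=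
  ∃ G : Fin d → Bool, (∃ i, G i = true) ∧ (∃ i, G i = false) ∧
    ∀ (y : S.Xd d) (i : Fin d), Sw y i = if G i then S.T (y i) else y i

/-- The empirical measure `γ_J = ∑_{j ∈ J} δ_{(T^{×d})^j x}` along a two-sided orbit `o`. -/
def emp (S : NFC) (d : ℕ) (o : ℤ → S.Xd d) (J : Finset ℤ) : Measure (S.Xd d) :=
  ∑ j ∈ J, Measure.dirac (o j)

end NFC

/-- `J` is a (nonempty finite) interval of `ℤ`. -/
def IsIntervalZ (J : Finset ℤ) : Prop := ∃ a b : ℤ, a ≤ b ∧ J = Finset.Icc a b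

namespace NFC

/-- `J` is an `n`-crossing for the orbit `o` of a point of `X^d`: a maximal interval on which
the orbit stays in `C_n^d` with all the `t_n(T^j x_i)` constant. -/
def IsCrossing (S : NFC) (d : ℕ) (o : ℤ → S.Xd d) (n : ℕ) (J : Finset ℤ) : Prop :=
  IsIntervalZ J ∧
  (∀ j ∈ J, o j ∈ S.towerD d n) ∧
  (∀ i : Fin d, ∀ j ∈ J, ∀ j' ∈ J, S.toNFCseq.tcol n (o j i) = S.toNFCseq.tcol n (o j' i)) ∧
  ∀ J' : Finset ℤ, J ⊆ J' → IsIntervalZ J' →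
    (∀ j ∈ J', o j ∈ S.towerD d n) →
    (∀ i : Fin d, ∀ j ∈ J', ∀ j' ∈ J', S.toNFCseq.tcol n (o j i) = S.toNFCseq.tcol n (o j' i)) →
    J' = J

/-- An `n`-crossing is synchronized if `t_n(T^j x_1) = ⋯ = t_n(T^j x_d)` on it. -/
def IsSync (S : NFC) (d : ℕ) (o : ℤ → S.Xd d) (n : ℕ) (J : Finset ℤ) : Prop :=
  ∀ j ∈ J, ∀ i i' : Fin d, S.toNFCseq.tcol n (o j i) = S.toNFCseq.tcol n (o j i')

end NFC

/-- The interval `I_n` of length `h_n` centered at `0`. -/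
def Imid (P : NFCseq) (n : ℕ) : Finset ℤ :=
  Finset.Icc (-((P.hgt n / 2 : ℕ) : ℤ)) (-((P.hgt n / 2 : ℕ) : ℤ) + P.hgt n - 1)

namespace NFC

/-- A substantial `n`-crossing: an `n`-crossing whose intersection with `I_n` has at least
`η·h_n` elements. -/
def IsSubstantial (S : NFC) (d : ℕ) (o : ℤ → S.Xd d) (η : ℝ) (n : ℕ) (J : Finset ℤ) : Prop :=
  S.IsCrossing d o n J ∧ η * S.toNFCseq.hgt n ≤ ((J ∩ Imid S.toNFCseq n).card : ℝ)

/-- `x_i` climbs into tower `n` along the interval `I`. -/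
def Climbs (S : NFC) (d : ℕ) (o : ℤ → S.Xd d) (i : Fin d) (n : ℕ) (I : Finset ℤ) : Prop :=
  (∀ j ∈ I, (o j) i ∈ S.toNFCseq.tower n) ∧
  ¬ ∃ j : ℤ, j ∈ I ∧ j + 1 ∈ I ∧
      (o j) i ∈ S.toNFCseq.level n (S.toNFCseq.hgt n - 1) ∧
      (o (j + 1)) i ∈ S.toNFCseq.level n 0

end NFC

/-- The nearly finite Chacon system together with the conull set `X_∞` and the function
`x ↦ ℓ(x)` of Lemma 2.3. -/
structure NFCX extends NFC where
  Xinf : Set toNFCseq.Xpt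
  ellx : toNFCseq.Xpt → ℕ
  Xinf_conull : μ Xinfᶜ = 0
  Xinf_spec : ∀ x ∈ Xinf, ∀ ℓ : ℕ, ellx x ≤ ℓ → ∀ n : ℕ,
    nseq (ℓ - 1) ≤ n → n + ℓ ≤ nseq ℓ →
      x ∈ toNFCseq.tower n ∧ ¬ toNFCseq.inFirstHundred n (nseq ℓ) x ∧
        ¬ toNFCseq.inLastHundred n (nseq ℓ) x

namespace NFCX

/-- `o` is the two-sided orbit of a `σ`-typical point `x = o 0` (satisfying
conditions (1), (2) and (3) of Section 3.4 of the paper). -/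
def IsTypicalOrbit (S : NFCX) (d : ℕ) (σ : Measure (S.toNFC.Xd d))
    (o : ℤ → S.toNFC.Xd d) : Prop :=
  (∀ j : ℤ, S.toNFC.Td d (o j) = o (j + 1)) ∧
  (∀ j : ℤ, ∀ n : ℕ, 0 < σ (S.toNFC.towerD d n) →
    ∀ B : Set (S.toNFC.Xd d), S.toNFC.IsNBox d n B →
    ∀ a b : ℕ → ℤ, (∀ k, a k ≤ 0) → (∀ k, 0 ≤ b k) →
      Tendsto (fun k => b k - a k) atTop atTop →
      Tendsto (fun k =>
          (((Finset.Icc (a k) (b k)).filter (fun j' => o (j + j') ∈ B)).card : ℝ) /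
            (((Finset.Icc (a k) (b k)).filter
              (fun j' => o (j + j') ∈ S.toNFC.towerD d n)).card : ℝ))
        atTop (𝓝 ((σ B).toReal / (σ (S.toNFC.towerD d n)).toReal))) ∧
  (∀ n : ℕ, ∀ B : Set (S.toNFC.Xd d), S.toNFC.IsNBox d n B → o 0 ∈ B → 0 < σ B) ∧
  (∀ i : Fin d, (o 0) i ∈ S.Xinf)

end NFCX

/-! ## Subsets of `ℤ` of order `ℓ` inside an interval -/

/-- A piece of `F ∩ I`: a maximal interval included in `F ∩ I`. -/
def IsPieceZ (F : Set ℤ) (I : Finset ℤ) (J : Finset ℤ) : Prop :=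
  IsIntervalZ J ∧ (↑J : Set ℤ) ⊆ F ∩ ↑I ∧
    ∀ J' : Finset ℤ, IsIntervalZ J' → (↑J' : Set ℤ) ⊆ F ∩ ↑I → J ⊆ J' → J' = J

/-- A hole of `F ∩ I`: a maximal interval included in `I \ F`. -/
def IsHoleZ (F : Set ℤ) (I : Finset ℤ) (J : Finset ℤ) : Prop :=
  IsIntervalZ J ∧ (↑J : Set ℤ) ⊆ (↑I : Set ℤ) \ F ∧
    ∀ J' : Finset ℤ, IsIntervalZ J' → (↑J' : Set ℤ) ⊆ (↑I : Set ℤ) \ F → J ⊆ J' → J' = J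

/-- Each hole of `F ∩ I` has size at most `s`. -/
def HolesSmall (F : Set ℤ) (I : Finset ℤ) (s : ℕ) : Prop :=
  ∀ H : Finset ℤ, IsHoleZ F I H → H.card ≤ s

/-- Two consecutive holes of `F ∩ I` are always separated by a piece of size at least `c`. -/
def HolesSeparated (F : Set ℤ) (I : Finset ℤ) (c : ℕ) : Prop :=
  ∀ H₁ H₂ : Finset ℤ, IsHoleZ F I H₁ → IsHoleZ F I H₂ →
    (∀ a ∈ H₁, ∀ b ∈ H₂, a < b) →
    ∃ J : Finset ℤ, IsPieceZ F I J ∧ c ≤ J.card ∧ ∀ a ∈ H₁, ∀ b ∈ H₂, ∀ x ∈ J, a < x ∧ x < b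

/-- `F` is of order `ℓ ≥ 1` inside the interval `I`, with respect to the sequences `c`, `s`. -/
def IsOrder (c s : ℕ → ℕ) : ℕ → Set ℤ → Finset ℤ → Prop
  | 0, _, _ => False
  | 1, F, I => HolesSmall F I (s 1) ∧ HolesSeparated F I (c 1)
  | (ℓ + 2), F, I => ∃ F' : Set ℤ, F ⊆ F' ∧ HolesSmall F' I (s (ℓ + 2)) ∧
      HolesSeparated F' I (c (ℓ + 2)) ∧
      ∀ J : Finset ℤ, IsPieceZ F' I J → IsOrder c s (ℓ + 1) F J

/-- `p_1`: the smallest integer such that `3^{p_1} > 2d+1` and `p_1 > d`. -/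
def pOne (d : ℕ) : ℕ := sInf {p : ℕ | 2 * d + 1 < 3 ^ p ∧ d < p}

/-- `p_2`: the smallest integer such that `1/3^{p_2} < η/3`. -/
def pTwo (η : ℝ) : ℕ := sInf {p : ℕ | ((3 : ℝ) ^ p)⁻¹ < η / 3}


/-! ### Combinatorics of the towers -/

namespace NFCseq

variable (P : NFCseq)

theorem hgt_succ' (n : ℕ) : P.hgt (n + 1) = 3 * P.hgt n + 3 * P.spa n + 1 := by
  rw [hgt]; rfl

theorem lt_hgt (n : ℕ) : n < P.hgt n := by
  induction n with
  | zero => exact P.hgt_pos 0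
  | succ n ih => rw [hgt_succ']; omega

theorem hgt_mono : Monotone P.hgt :=
  monotone_nat_of_le_succ fun n => by rw [hgt_succ']; omega

theorem pmap_lt {n j k : ℕ} (h : P.pmap n j = some k) : k < P.hgt n := by
  unfold pmap at h
  split_ifs at h <;> simp at h <;> omega

theorem pmap_of_lt {n j : ℕ} (h : j < P.hgt n) : P.pmap n j = some j := by
  simp [pmap, h]

theorem pmap_succ_iff (n i k : ℕ) :
    P.pmap n (i + 1) = some (k + 1) ↔ P.pmap n i = some k ∧ k + 1 < P.hgt n := by
  have := P.hgt_pos n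
  unfold pmap
  split_ifs <;> simp <;> omega

variable {P}

theorem Xpt.lt {x : P.Xpt} {n j : ℕ} (h : x.1 n = some j) : j < P.hgt n := by
  rw [x.2.1 n] at h
  obtain ⟨a, -, ha⟩ := Option.bind_eq_some_iff.1 h
  exact P.pmap_lt ha

/-- The level of `x` in a tower determines its levels in all lower towers. -/
theorem Xpt.eq_of_le {x y : P.Xpt} {m n : ℕ} (hmn : m ≤ n) (h : x.1 n = y.1 n) :
    x.1 m = y.1 m := by
  induction n, hmn using Nat.le_induction with
  | base => exact h
  | succ n _ ih => exact ih (by rw [x.2.1 n, y.2.1 n, h])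

theorem Xpt.zero_of_le {x : P.Xpt} {m n : ℕ} (hmn : m ≤ n) (h : x.1 n = some 0) :
    x.1 m = some 0 := Xpt.eq_of_le (y := P.zeroPt) hmn h

theorem Xpt.ne_none_of_le {x : P.Xpt} {m n : ℕ} (hmn : m ≤ n) (h : x.1 m ≠ none) :
    x.1 n ≠ none := by
  induction n, hmn using Nat.le_induction with
  | base => exact h
  | succ n _ ih =>
    intro h'
    rw [x.2.1 n, h'] at ih
    exact ih rfl

/-- Low levels of tower `m` keep their index in every higher tower: reading them back from
tower `n` to tower `m` does not change the index. -/
theorem Xpt.eq_some_of_lt {x : P.Xpt} {m n v : ℕ} (hmn : m ≤ n) (hv : v < P.hgt m)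
    (h : x.1 n = some v) : x.1 m = some v := by
  induction n, hmn using Nat.le_induction with
  | base => exact h
  | succ n hn ih =>
    have hmono := P.hgt_mono hn
    apply ih
    rw [x.2.1 n, h]
    exact P.pmap_of_lt (by omega)

/-- A point other than `𝟎` eventually lies in the towers, outside their bottom levels. -/
theorem Xpt.eventually_pos {x : P.Xpt} (hx : ¬ ∀ n, x.1 n = some 0) :
    ∀ᶠ m in atTop, ∃ j, j ≠ 0 ∧ x.1 m = some j := by
  push Not at hx
  obtain ⟨a, ha⟩ := hx
  obtain ⟨b, hb⟩ := x.2.2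
  filter_upwards [eventually_ge_atTop a, eventually_ge_atTop b] with m hma hmb
  obtain ⟨j, hj⟩ := Option.ne_none_iff_exists'.1 (Xpt.ne_none_of_le hmb hb)
  refine ⟨j, ?_, hj⟩
  rintro rfl
  exact ha (Xpt.zero_of_le hma hj)

theorem tcol_spec {x : P.Xpt} {r j : ℕ} (hs : P.spa r = 0) (hj : x.1 r = some j) :
    ∃ j', x.1 (r + 1) = some j' ∧ ((P.tcol r x = 1 ∧ j' = j) ∨
      (P.tcol r x = 2 ∧ j' = P.hgt r + j) ∨ (P.tcol r x = 3 ∧ j' = 2 * P.hgt r + 1 + j)) := by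
  have h := hj
  rw [x.2.1 r] at h
  obtain ⟨a, ha, hp⟩ := Option.bind_eq_some_iff.1 h
  refine ⟨a, ha, ?_⟩
  unfold tcol
  rw [ha]
  simp only
  unfold pmap at hp
  simp only [hs] at hp ⊢
  split_ifs at hp ⊢ <;> simp at hp <;> omega

/-- As long as `x` stays in the last column, without spacers on top of it, its distance to the
top of the tower does not change. -/
theorem top_of_tcol {x : P.Xpt} {n v : ℕ} (hv : x.1 n = some v) {r : ℕ} (hr : n ≤ r)
    (hs : ∀ s, n ≤ s → s < r → P.spa s = 0) (ht : ∀ s, n ≤ s → s < r → P.tcol s x = 3) :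
    ∃ j, x.1 r = some j ∧ j + P.hgt n = P.hgt r + v := by
  induction r, hr using Nat.le_induction with
  | base => exact ⟨v, hv, by omega⟩
  | succ r hr ih =>
    obtain ⟨j, hj, he⟩ := ih (fun s h1 h2 => hs s h1 (by omega)) (fun s h1 h2 => ht s h1 (by omega))
    obtain ⟨j', hj', hc⟩ := tcol_spec (hs r hr (by omega)) hj
    have := ht r hr (by omega)
    refine ⟨j', hj', ?_⟩
    rw [hgt_succ', hs r hr (by omega)]
    omega

/-- A point which is not in the last hundred occurrences of tower `n` inside tower `M` is, at some
intermediate step, not in the last column. -/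
theorem exists_tcol_ne {x : P.Xpt} {n M : ℕ} (hnM : n ≤ M) (hl : ¬ P.inLastHundred n M x) :
    ∃ r, n ≤ r ∧ r < M ∧ P.tcol r x ≠ 3 := by
  by_contra! hcon
  apply hl
  have key : P.occIdx n M x + 1 = 3 ^ (M - n) := by
    clear hl
    induction M, hnM using Nat.le_induction with
    | base => simp [occIdx]
    | succ M hM ih =>
      have := ih (fun r h1 h2 => hcon r h1 (by omega))
      unfold occIdx at this ⊢
      rw [Finset.sum_Ico_succ_top hM, hcon M hM (by omega), Nat.sub_add_comm hM, pow_succ]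
      omega
  unfold inLastHundred
  omega

theorem nseq_strictMono : StrictMono P.nseq := by
  refine strictMono_nat_of_lt_succ fun n => ?_
  have := P.nseq_growth (n + 1) (by omega)
  simp at this
  omega

theorem spa_eq_zero {ℓ r : ℕ} (hℓ : 1 ≤ ℓ) (h1 : P.nseq ℓ - ℓ ≤ r) (h2 : r < P.nseq ℓ) :
    P.spa r = 0 := by
  unfold spa
  rw [dif_neg]
  rintro ⟨k, hk, rfl⟩
  have hkℓ : k < ℓ := P.nseq_strictMono.lt_iff_lt.1 h2
  have : P.nseq k ≤ P.nseq (ℓ - 1) := P.nseq_strictMono.monotone (by omega)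
  have := P.nseq_growth ℓ hℓ
  omega

end NFCseq

namespace NFC

variable {S : NFC}

/-- `T` moves points one level up inside every tower: this is `T⁻¹ L_m^{k+1} = L_m^k`. -/
theorem T_step (x : S.toNFCseq.Xpt) (m k : ℕ) :
    (S.T x).1 m = some (k + 1) ↔ x.1 m = some k ∧ k + 1 < S.toNFCseq.hgt m := by
  obtain ⟨N, hN⟩ := S.T_up x
  -- true in the towers of index at least `N`, then by descending induction
  have key : ∀ t m, N ≤ m + t → ∀ k, ((S.T x).1 m = some (k + 1) ↔
      x.1 m = some k ∧ k + 1 < S.toNFCseq.hgt m) := by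
    intro t
    induction t with
    | zero =>
      intro m hm k
      obtain ⟨j, h1, h2⟩ := hN m (by omega)
      have := NFCseq.Xpt.lt h2
      rw [h1, h2]
      simp only [Option.some.injEq]
      omega
    | succ t ih =>
      intro m hm k
      have ih' := ih (m + 1) (by omega)
      rw [(S.T x).2.1 m, x.2.1 m, Option.bind_eq_some_iff]
      constructor
      · rintro ⟨a, ha, hp⟩
        rcases a with _ | a
        · rw [S.toNFCseq.pmap_zero] at hp
          simp at hp
        · obtain ⟨h1, h2⟩ := (S.toNFCseq.pmap_succ_iff m a k).1 hp
          rw [((ih' a).1 ha).1]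
          exact ⟨h1, h2⟩
      · rintro ⟨h, h2⟩
        obtain ⟨a, ha, hp⟩ := Option.bind_eq_some_iff.1 h
        have hp' := (S.toNFCseq.pmap_succ_iff m a k).2 ⟨hp, h2⟩
        refine ⟨a + 1, (ih' a).2 ⟨ha, ?_⟩, hp'⟩
        -- level `a + 1` exists in tower `m + 1`, because `p_m` maps it into tower `m`
        rw [S.toNFCseq.hgt_succ']
        unfold NFCseq.pmap at hp'
        split_ifs at hp' <;> omega
  exact key N m (by omega) k

theorem T_iter {x : S.toNFCseq.Xpt} {m j : ℕ} (hj : x.1 m = some j) (k : ℕ)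
    (hk : j + k < S.toNFCseq.hgt m) : (S.T^[k] x).1 m = some (j + k) := by
  induction k with
  | zero => exact hj
  | succ k ih =>
    rw [Function.iterate_succ_apply']
    exact (T_step _ _ _).2 ⟨ih (by omega), by omega⟩

/-- Applying `T^{h_n}` to a point which is not in the last occurrence of tower `n` inside tower
`M`, when only single spacers are inserted between steps `n` and `M`, brings it to the next
occurrence of tower `n`, at the same level or one level below. Hence the image still lies in
`C_m`, if the point was in a level of tower `m` other than the bottom one. -/
theorem T_iter_hgt {x : S.toNFCseq.Xpt} {m n M : ℕ} (hmn : m ≤ n) (hnM : n ≤ M)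
    (hs : ∀ r, n ≤ r → r < M → S.toNFCseq.spa r = 0) (hx : x.1 n ≠ none)
    (hl : ¬ S.toNFCseq.inLastHundred n M x) {u : ℕ} (hu : u ≠ 0) (hxm : x.1 m = some u) :
    (S.T^[S.toNFCseq.hgt n] x).1 m ≠ none := by
  obtain ⟨v, hv⟩ := Option.ne_none_iff_exists'.1 hx
  have hv0 : v ≠ 0 := by
    rintro rfl
    have := NFCseq.Xpt.zero_of_le hmn hv
    rw [hxm] at this
    exact hu (Option.some.inj this)
  have hvlt := NFCseq.Xpt.lt hv
  -- the first step at which `x` is not in the last column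
  obtain ⟨r, hr1, hr2, hr3, hmin⟩ : ∃ r, n ≤ r ∧ r < M ∧ S.toNFCseq.tcol r x ≠ 3 ∧
      ∀ s, n ≤ s → s < r → S.toNFCseq.tcol s x = 3 := by
    have hex := NFCseq.exists_tcol_ne hnM hl
    have hspec := Nat.find_spec hex
    refine ⟨Nat.find hex, hspec.1, hspec.2.1, hspec.2.2, fun s h1 h2 => ?_⟩
    by_contra h3
    exact Nat.find_min hex h2 ⟨h1, h2.trans hspec.2.1, h3⟩
  obtain ⟨j, hj, hje⟩ := NFCseq.top_of_tcol hv hr1 (fun s h1 h2 => hs s h1 (by omega)) hmin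
  have hsr := hs r hr1 hr2
  obtain ⟨j', hj', hc⟩ := NFCseq.tcol_spec hsr hj
  have hjlt := NFCseq.Xpt.lt hj
  have hsucc := S.toNFCseq.hgt_succ' r
  have hmono := S.toNFCseq.hgt_mono hr1
  set y := S.T^[S.toNFCseq.hgt n] x with hy
  have hyr : y.1 (r + 1) = some (j' + S.toNFCseq.hgt n) := T_iter hj' _ (by omega)
  have hyr' := y.2.1 r
  rw [hyr, Option.bind_some] at hyr'
  have hcase : y.1 r = some v ∨ y.1 r = some (v - 1) := by
    rcases hc with ⟨-, hc⟩ | ⟨-, hc⟩ | ⟨h3, -⟩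
    · left
      rw [hyr']
      unfold NFCseq.pmap
      simp only [hsr]
      split_ifs <;> first | omega | (rw [Option.some.injEq]; omega)
    · right
      rw [hyr']
      unfold NFCseq.pmap
      simp only [hsr]
      split_ifs <;> first | omega | (rw [Option.some.injEq]; omega)
    · exact absurd h3 hr3
  -- `y` lies in the first occurrence of tower `n` in tower `r`, where levels keep their index
  rcases hcase with h | h
  · have h2 : y.1 n = x.1 n := by
      rw [hv]
      exact NFCseq.Xpt.eq_some_of_lt hr1 hvlt h
    rw [NFCseq.Xpt.eq_of_le hmn h2, hxm]
    simp
  · have h2 : y.1 n = some (v - 1) := NFCseq.Xpt.eq_some_of_lt hr1 (by omega) h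
    obtain ⟨w, rfl⟩ := Nat.exists_eq_succ_of_ne_zero hv0
    obtain ⟨u', rfl⟩ := Nat.exists_eq_succ_of_ne_zero hu
    have h3 : (S.T y).1 n = x.1 n := by
      rw [hv]
      exact (T_step y n w).2 ⟨h2, hvlt⟩
    have h4 := NFCseq.Xpt.eq_of_le hmn h3
    rw [hxm] at h4
    rw [((T_step y m u').1 h4).1]
    simp

/-! ### Sets determined by the levels in a given tower -/

/-- The vector of the levels of tower `m` containing the coordinates of a point of `X^d`
(`none` marking the coordinates outside tower `m`). -/
def lev (S : NFC) (d m : ℕ) (y : S.Xd d) : Fin d → Option ℕ := fun i => (y i).1 m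

variable {d : ℕ}

theorem measurableSet_coord (m : ℕ) (o : Option ℕ) :
    MeasurableSet {x : S.toNFCseq.Xpt | x.1 m = o} := by
  have : DiscreteTopology (Option ℕ) := ⟨rfl⟩
  apply MeasurableSpace.measurableSet_generateFrom
  have hc : Continuous (fun x : S.toNFCseq.Xpt => x.1 m) :=
    (continuous_apply m).comp continuous_subtype_val
  exact (isOpen_discrete ({o} : Set (Option ℕ))).preimage hc

theorem measurableSet_lev (m : ℕ) (V : Set (Fin d → Option ℕ)) :
    MeasurableSet (S.lev d m ⁻¹' V) := by
  rw [← biUnion_preimage_singleton]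
  refine MeasurableSet.biUnion (to_countable V) fun w _ => ?_
  have : S.lev d m ⁻¹' {w} =
      ⋂ i, (fun y : S.Xd d => y i) ⁻¹' {x : S.toNFCseq.Xpt | x.1 m = w i} := by
    ext y
    simp [lev, funext_iff]
  rw [this]
  exact MeasurableSet.iInter fun i => measurable_pi_apply i (measurableSet_coord m (w i))

/-- The sets determined by the levels in one tower of index at least `m`. -/
def levSets (S : NFC) (d m : ℕ) : Set (Set (S.Xd d)) :=
  {E | ∃ n, m ≤ n ∧ ∃ V, E = S.lev d n ⁻¹' V}

theorem lev_mono {n n' : ℕ} (h : n ≤ n') (V : Set (Fin d → Option ℕ)) :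
    ∃ V', S.lev d n ⁻¹' V = S.lev d n' ⁻¹' V' := by
  refine ⟨S.lev d n' '' (S.lev d n ⁻¹' V), ?_⟩
  refine (subset_preimage_image _ _).antisymm ?_
  rintro y ⟨z, hz, hzy⟩
  have : S.lev d n y = S.lev d n z := by
    funext i
    exact NFCseq.Xpt.eq_of_le h (congrFun hzy i).symm
  change S.lev d n y ∈ V
  rw [this]
  exact hz

theorem isPiSystem_levSets (m : ℕ) : IsPiSystem (S.levSets d m) := by
  rintro _ ⟨n, hn, V, rfl⟩ _ ⟨n', hn', V', rfl⟩ -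
  obtain ⟨W, hW⟩ := lev_mono (S := S) (le_max_left n n') V
  obtain ⟨W', hW'⟩ := lev_mono (S := S) (le_max_right n n') V'
  exact ⟨max n n', le_trans hn (le_max_left _ _), W ∩ W', by rw [hW, hW', preimage_inter]⟩

theorem generateFrom_levSets (m : ℕ) :
    (inferInstance : MeasurableSpace (S.Xd d)) = MeasurableSpace.generateFrom (S.levSets d m) := by
  apply le_antisymm
  · refine iSup_le fun i => ?_
    rw [MeasurableSpace.comap_le_iff_le_map]
    refine MeasurableSpace.generateFrom_le fun U hU => ?_
    change MeasurableSet[MeasurableSpace.generateFrom (S.levSets d m)]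
      ((fun y : S.Xd d => y i) ⁻¹' U)
    -- an open set is the union of the (countably many) cylinders it contains
    have hUeq : (fun y : S.Xd d => y i) ⁻¹' U =
        ⋃ p : {p : ℕ × Option ℕ // m ≤ p.1 ∧ {x : S.toNFCseq.Xpt | x.1 p.1 = p.2} ⊆ U},
          S.lev d p.1.1 ⁻¹' {w | w i = p.1.2} := by
      ext y
      simp only [mem_preimage, mem_iUnion]
      constructor
      · intro hy
        obtain ⟨U', hU', rfl⟩ := isOpen_induced_iff.1 hU
        obtain ⟨I, u, h1, h2⟩ := isOpen_pi_iff.1 hU' (y i).1 hy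
        refine ⟨⟨(max m (I.sup id), (y i).1 (max m (I.sup id))), le_max_left _ _, ?_⟩, rfl⟩
        intro x hx
        apply h2
        intro k hk
        have hkle : k ≤ max m (I.sup id) :=
          le_trans (Finset.le_sup (f := id) hk) (le_max_right _ _)
        rw [NFCseq.Xpt.eq_of_le hkle hx]
        exact (h1 k hk).2
      · rintro ⟨⟨⟨n, o⟩, hn, hsub⟩, hy⟩
        exact hsub hy
    rw [hUeq]
    exact MeasurableSet.iUnion fun p =>
      MeasurableSpace.measurableSet_generateFrom ⟨p.1.1, p.2.1, _, rfl⟩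
  · refine MeasurableSpace.generateFrom_le ?_
    rintro _ ⟨n, -, V, rfl⟩
    exact measurableSet_lev n V

/-- The vectors of level indices describing `Ω_m`. -/
def posVec (d : ℕ) : Set (Fin d → Option ℕ) := {w | ∀ i, ∃ j, j ≠ 0 ∧ w i = some j}

theorem OmegaD_eq (m : ℕ) : S.OmegaD d m = S.lev d m ⁻¹' posVec d := by
  ext y
  refine forall_congr' fun i => exists_congr fun j => and_congr_right fun _ => ?_
  exact ⟨fun h => h.2, fun h => ⟨NFCseq.Xpt.lt h, h⟩⟩

theorem OmegaD_mono : Monotone (S.OmegaD d) := by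
  intro m n hmn y hy i
  obtain ⟨j, hj0, -, hj⟩ := hy i
  have hne : (y i).1 m ≠ none := by
    rw [show (y i).1 m = some j from hj]
    simp
  obtain ⟨k, hk⟩ := Option.ne_none_iff_exists'.1 (NFCseq.Xpt.ne_none_of_le hmn hne)
  refine ⟨k, ?_, NFCseq.Xpt.lt hk, hk⟩
  rintro rfl
  have := NFCseq.Xpt.zero_of_le hmn hk
  rw [show (y i).1 m = some j from hj] at this
  exact hj0 (Option.some.inj this)

theorem OmegaD_subset_towerD (m : ℕ) : S.OmegaD d m ⊆ S.towerD d m := by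
  intro y hy i
  obtain ⟨j, -, -, hj⟩ := hy i
  change (y i).1 m ≠ none
  rw [show (y i).1 m = some j from hj]
  simp

theorem measurableSet_towerD (m : ℕ) : MeasurableSet (S.towerD d m) :=
  measurableSet_lev m {w | ∀ i, w i ≠ none}

theorem measurableSet_OmegaD (m : ℕ) : MeasurableSet (S.OmegaD d m) := by
  rw [OmegaD_eq]
  exact measurableSet_lev m _

/-- The points with no coordinate equal to `𝟎` are exhausted by the sets `Ω_m`. -/
theorem compl_iUnion_OmegaD :
    (⋃ m, S.OmegaD d m)ᶜ ⊆ ⋃ i, {y : S.Xd d | ∀ n, (y i).1 n = some 0} := by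
  intro y hy
  by_contra hcon
  simp only [mem_iUnion, mem_ofPred_eq, not_exists] at hcon
  obtain ⟨m, hm⟩ := (eventually_all.2 fun i => NFCseq.Xpt.eventually_pos (hcon i)).exists
  apply hy
  rw [mem_iUnion]
  refine ⟨m, ?_⟩
  rw [OmegaD_eq]
  exact hm

theorem measurableSet_zero (i : Fin d) :
    MeasurableSet {y : S.Xd d | ∀ n, (y i).1 n = some 0} := by
  rw [ofPred_forall]
  exact MeasurableSet.iInter fun n => measurableSet_lev n {w | w i = some 0}

/-- The hyperplanes `y_i = 𝟎` are null, because `𝟎` is not in the range of `T`. -/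
theorem null_zero {σ : Measure (S.Xd d)} (hT : MeasurePreserving (S.Td d) σ σ) (i : Fin d) :
    σ {y : S.Xd d | ∀ n, (y i).1 n = some 0} = 0 := by
  rw [← hT.measure_preimage (measurableSet_zero i).nullMeasurableSet]
  convert measure_empty (μ := σ)
  refine eq_empty_of_forall_notMem fun y hy => ?_
  have h0 : S.T (y i) = S.toNFCseq.zeroPt := Subtype.ext (funext hy)
  have : S.T (y i) ∈ ({S.toNFCseq.zeroPt}ᶜ : Set _) := S.T_range ▸ mem_range_self (y i)
  exact this h0

/-! ### Twisting transformations -/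

/-- The map applying `T` to the coordinates selected by `G` and the identity to the others. -/
def tw (S : NFC) (d : ℕ) (G : Fin d → Bool) (y : S.Xd d) : S.Xd d :=
  fun i => if G i then S.T (y i) else y i

theorem measurable_tw (G : Fin d → Bool) : Measurable (S.tw d G) := by
  refine measurable_pi_lambda _ fun i => ?_
  by_cases h : G i
  · simp only [tw, h, if_true]
    exact S.T_meas.comp (measurable_pi_apply i)
  · simp only [tw, h, Bool.false_eq_true, if_false]
    exact measurable_pi_apply i

theorem tw_iter (G : Fin d → Bool) (k : ℕ) (y : S.Xd d) (i : Fin d) :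
    (S.tw d G)^[k] y i = if G i then S.T^[k] (y i) else y i := by
  induction k with
  | zero => simp
  | succ k ih =>
    rw [Function.iterate_succ_apply', tw, ih, Function.iterate_succ_apply']
    split_ifs <;> rfl

theorem tw_comp_compl (G : Fin d → Bool) :
    S.tw d G ∘ S.tw d (fun i => !G i) = S.Td d ∧ S.tw d (fun i => !G i) ∘ S.tw d G = S.Td d := by
  constructor <;> funext y i <;> cases h : G i <;> simp [tw, Td, h]

/-- The preimage under a twist of an `m`-box contained in `Ω_m` is again an `m`-box. -/
theorem isNBox_tw_preimage (G : Fin d → Bool) (m : ℕ) {w : Fin d → Option ℕ} (hw : w ∈ posVec d) :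
    (S.tw d G ⁻¹' (S.lev d m ⁻¹' {w}) = ∅ ∧ S.lev d m ⁻¹' {w} = ∅) ∨
    (S.IsNBox d m (S.tw d G ⁻¹' (S.lev d m ⁻¹' {w})) ∧ S.IsNBox d m (S.lev d m ⁻¹' {w})) := by
  choose v hv0 hv using hw
  by_cases hlt : ∀ i, v i < S.toNFCseq.hgt m
  · right
    constructor
    · refine ⟨fun i => if G i then v i - 1 else v i, fun i => ?_, ?_⟩
      · have := hlt i
        dsimp only
        split_ifs <;> omega
      · ext y
        simp only [mem_preimage, mem_singleton_iff, funext_iff, mem_ofPred_eq, NFCseq.level, lev]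
        refine forall_congr' fun i => ?_
        rw [hv i]
        by_cases h : G i
        · obtain ⟨u, hu⟩ := Nat.exists_eq_succ_of_ne_zero (hv0 i)
          have := hlt i
          simp only [tw, h, if_true, hu, Nat.succ_eq_add_one, Nat.add_sub_cancel]
          rw [T_step]
          exact and_iff_left (by omega)
        · simp [tw, h]
    · refine ⟨v, hlt, ?_⟩
      ext y
      simp only [mem_preimage, mem_singleton_iff, funext_iff, mem_ofPred_eq, NFCseq.level, lev, hv]
  · left
    have hem : S.lev d m ⁻¹' {w} = ∅ := by
      refine eq_empty_of_forall_notMem fun y hy => hlt fun i => ?_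
      have : (y i).1 m = some (v i) := by rw [← hv i]; exact congrFun hy i
      exact NFCseq.Xpt.lt this
    rw [hem]
    simp

theorem IsNBox.subset_towerD {m : ℕ} {B : Set (S.Xd d)} (hB : S.IsNBox d m B) :
    B ⊆ S.towerD d m := by
  obtain ⟨v, -, rfl⟩ := hB
  intro y hy i
  change (y i).1 m ≠ none
  rw [show (y i).1 m = some (v i) from hy i]
  simp

/-! ### Proportionality of `σ` and its image -/

theorem lev_measure_ext {ν₁ ν₂ : Measure (S.Xd d)} (m : ℕ) (V : Set (Fin d → Option ℕ))
    (h : ∀ w ∈ V, ν₁ (S.lev d m ⁻¹' {w}) = ν₂ (S.lev d m ⁻¹' {w})) :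
    ν₁ (S.lev d m ⁻¹' V) = ν₂ (S.lev d m ⁻¹' V) := by
  have hpd : V.PairwiseDisjoint fun w => S.lev d m ⁻¹' {w} := by
    intro w _ w' _ hne
    exact Disjoint.preimage _ (disjoint_singleton.2 hne)
  rw [← biUnion_preimage_singleton,
    measure_biUnion (to_countable V) hpd (fun w _ => measurableSet_lev m _),
    measure_biUnion (to_countable V) hpd (fun w _ => measurableSet_lev m _)]
  exact tsum_congr fun w => h w w.2

/-- Two measures carried by `⋃ m, Ω_m` and finite on each `Ω_m` are equal as soon as they agree on
the boxes contained in the `Ω_m`, for large `m`. Each restriction to `Ω_m` is handled by the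
π-system of the sets determined by the levels in one tower of index at least `m`. -/
theorem ext_of_boxes {ν₁ ν₂ : Measure (S.Xd d)} (m₀ : ℕ)
    (h : ∀ m, m₀ ≤ m → ∀ w ∈ posVec d,
      ν₁ (S.lev d m ⁻¹' {w}) = ν₂ (S.lev d m ⁻¹' {w}))
    (hfin : ∀ m, ν₁ (S.OmegaD d m) < ⊤)
    (h₁ : ν₁ (⋃ m, S.OmegaD d m)ᶜ = 0) (h₂ : ν₂ (⋃ m, S.OmegaD d m)ᶜ = 0) :
    ν₁ = ν₂ := by
  have hΩ : ∀ m, m₀ ≤ m → ν₁.restrict (S.OmegaD d m) = ν₂.restrict (S.OmegaD d m) := by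
    intro m hm
    have hlev : ∀ E ∈ S.levSets d m,
        ν₁.restrict (S.OmegaD d m) E = ν₂.restrict (S.OmegaD d m) E := by
      rintro _ ⟨n, hn, V, rfl⟩
      rw [Measure.restrict_apply (measurableSet_lev n V),
        Measure.restrict_apply (measurableSet_lev n V)]
      have hsub : S.lev d n ⁻¹' V ∩ S.OmegaD d m ⊆ S.lev d n ⁻¹' posVec d := by
        rw [← OmegaD_eq]
        exact inter_subset_right.trans (OmegaD_mono hn)
      obtain ⟨W, hW⟩ : ∃ W, S.OmegaD d m = S.lev d n ⁻¹' W := by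
        rw [OmegaD_eq]
        exact lev_mono hn _
      have heq : S.lev d n ⁻¹' V ∩ S.OmegaD d m = S.lev d n ⁻¹' (V ∩ W ∩ posVec d) := by
        rw [← inter_eq_left.2 hsub, hW]
        rfl
      rw [heq]
      exact lev_measure_ext n _ fun w hw => h n (hm.trans hn) w hw.2
    have : IsFiniteMeasure (ν₁.restrict (S.OmegaD d m)) :=
      ⟨by rw [Measure.restrict_apply_univ]; exact hfin m⟩
    refine ext_of_generate_finite (S.levSets d m) (generateFrom_levSets m) (isPiSystem_levSets m)
      hlev (hlev univ ⟨m, le_rfl, univ, by simp⟩)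
  ext A hA
  have hshift : (⋃ m, S.OmegaD d m) = ⋃ m, S.OmegaD d (m + m₀) :=
    (OmegaD_mono.iUnion_nat_add m₀).symm
  have hsup : ∀ ν : Measure (S.Xd d), ν (⋃ m, S.OmegaD d m)ᶜ = 0 →
      ν A = ⨆ m, ν (A ∩ S.OmegaD d (m + m₀)) := by
    intro ν hν
    have hmono : Monotone fun m => A ∩ S.OmegaD d (m + m₀) := fun a b hab =>
      inter_subset_inter_right _ (OmegaD_mono (by omega))
    rw [← hmono.measure_iUnion, ← inter_iUnion, ← hshift]
    exact (measure_inter_conull hν).symm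
  rw [hsup ν₁ h₁, hsup ν₂ h₂]
  congr 1
  funext m
  rw [← Measure.restrict_apply hA, ← Measure.restrict_apply hA, hΩ _ (by omega)]

end NFC

/-! ### The proportionality constant -/

/-- A nonzero Radon invariant measure carried by `X_∞^d` cannot be contracted by a twist: the
points of `Ω_m` whose coordinates satisfy `ℓ(x_i) ≤ L` are sent into `C_m^d` by the `h_n`-th power
of the twist, for arbitrarily large `n`, so that they form a null set. -/
theorem NFCX.no_contraction (S : NFCX) (d : ℕ) (σ : Measure (S.toNFC.Xd d)) (hσ0 : σ ≠ 0)
    (hR : S.toNFC.IsRadon d σ) (hT : MeasurePreserving (S.toNFC.Td d) σ σ)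
    (hconull : σ {y : S.toNFC.Xd d | ¬ ∀ i, y i ∈ S.Xinf} = 0)
    (G : Fin d → Bool) (c : ℝ≥0∞) (hc : c < 1)
    (h : ∀ A, MeasurableSet A → σ (S.toNFC.tw d G ⁻¹' A) = c * σ A) : False := by
  have hiter : ∀ k A, MeasurableSet A → σ ((S.toNFC.tw d G)^[k] ⁻¹' A) = c ^ k * σ A := by
    intro k
    induction k with
    | zero => intro A _; simp
    | succ k ih =>
      intro A hA
      rw [Function.iterate_succ', preimage_comp, ih _ (NFC.measurable_tw G hA), h A hA, pow_succ,
        mul_assoc]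
  apply hσ0
  rw [← Measure.measure_univ_eq_zero]
  -- the function `ℓ(x)` is not assumed measurable: only null sets and outer measure are used below
  have hcover : (univ : Set (S.toNFC.Xd d)) ⊆ {y | ¬ ∀ i, y i ∈ S.Xinf} ∪
      ((⋃ i, {y : S.toNFC.Xd d | ∀ n, (y i).1 n = some 0}) ∪
      ⋃ m, ⋃ L, S.toNFC.OmegaD d m ∩ {y | (∀ i, y i ∈ S.Xinf) ∧ ∀ i, S.ellx (y i) ≤ L}) := by
    intro y _
    by_cases h1 : ∀ i, y i ∈ S.Xinf
    · by_cases h2 : y ∈ ⋃ m, S.toNFC.OmegaD d m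
      · obtain ⟨m, hm⟩ := mem_iUnion.1 h2
        refine Or.inr (Or.inr (mem_iUnion.2 ⟨m, mem_iUnion.2
          ⟨Finset.univ.sup fun i => S.ellx (y i), hm, h1, fun i => ?_⟩⟩))
        exact Finset.le_sup (f := fun i => S.ellx (y i)) (Finset.mem_univ i)
      · exact Or.inr (Or.inl (NFC.compl_iUnion_OmegaD h2))
    · exact Or.inl h1
  refine measure_mono_null hcover (measure_union_null hconull (measure_union_null
    (measure_iUnion_null fun i => NFC.null_zero hT i)
    (measure_iUnion_null fun m => measure_iUnion_null fun L => ?_)))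
  have hlim : Tendsto (fun ℓ : ℕ => c ^ S.hgt (S.nseq ℓ - ℓ) * σ (S.toNFC.towerD d m)) atTop
      (𝓝 0) := by
    rw [← zero_mul (σ (S.toNFC.towerD d m))]
    refine ENNReal.Tendsto.mul_const ?_ (Or.inr (hR m).ne)
    refine (ENNReal.tendsto_pow_atTop_nhds_zero_of_lt_one hc).comp ?_
    refine tendsto_atTop_mono' _ ?_ tendsto_id
    filter_upwards [eventually_ge_atTop 1] with ℓ hℓ
    have h1 := S.nseq_growth ℓ hℓ
    have h2 := S.toNFCseq.lt_hgt (S.nseq ℓ - ℓ)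
    simp only [id]
    omega
  refine le_antisymm (ge_of_tendsto hlim ?_) bot_le
  filter_upwards [eventually_ge_atTop 1, eventually_ge_atTop L, eventually_ge_atTop m]
    with ℓ hℓ hL hm
  have hgrow := S.nseq_growth ℓ hℓ
  rw [← hiter _ _ (NFC.measurableSet_towerD m)]
  refine measure_mono ?_
  rintro y ⟨hy, hinf, hell⟩ i
  obtain ⟨u, hu0, -, hu⟩ := hy i
  change ((S.toNFC.tw d G)^[S.hgt (S.nseq ℓ - ℓ)] y i).1 m ≠ none
  rw [NFC.tw_iter]
  split_ifs
  · have hsp := S.Xinf_spec (y i) (hinf i) ℓ ((hell i).trans hL) (S.nseq ℓ - ℓ)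
      (by omega) (by omega)
    exact NFC.T_iter_hgt (by omega) (Nat.sub_le _ _)
      (fun r h1 h2 => NFCseq.spa_eq_zero hℓ h1 h2) hsp.1 hsp.2.2 hu0 hu
  · rw [show (y i).1 m = some u from hu]
    simp

/-- If there are sequences of Radon measures `σ_n → σ`, `σ'_n → σ` and
twisting transformations `S_n` with `σ'_n(S_n⁻¹ B) = σ_n(B)` for every `m`-box `B ⊆ Ω_m`
(for `n` large depending on `m`), then `σ` is invariant under some twisting
transformation. -/
theorem stmt19 (S : NFCX) (d : ℕ) (hd : 2 ≤ d)
    (σ : Measure (S.toNFC.Xd d)) (hσ0 : σ ≠ 0) (hR : S.toNFC.IsRadon d σ)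
    (herg : Ergodic (S.toNFC.Td d) σ)
    (hconull : σ {y : S.toNFC.Xd d | ¬ ∀ i, y i ∈ S.Xinf} = 0)
    (σn σ'n : ℕ → Measure (S.toNFC.Xd d)) (Sn : ℕ → (S.toNFC.Xd d → S.toNFC.Xd d))
    (hSn : ∀ n, S.toNFC.IsTwist d (Sn n))
    (hRσn : ∀ n, S.toNFC.IsRadon d (σn n)) (hRσ'n : ∀ n, S.toNFC.IsRadon d (σ'n n))
    (hconvσn : S.toNFC.RTendsto d σn σ) (hconvσ'n : S.toNFC.RTendsto d σ'n σ)
    (hbox : ∀ m : ℕ, ∀ᶠ n in atTop, ∀ B : Set (S.toNFC.Xd d),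
      S.toNFC.IsNBox d m B → B ⊆ S.toNFC.OmegaD d m → σ'n n (Sn n ⁻¹' B) = σn n B) :
    ∃ Sw : S.toNFC.Xd d → S.toNFC.Xd d, S.toNFC.IsTwist d Sw ∧
      ∀ A : Set (S.toNFC.Xd d), MeasurableSet A → σ (Sw ⁻¹' A) = σ A := by
  obtain ⟨hT, -⟩ := herg
  choose Gn hG1 hG2 hG using hSn
  -- some twist `S_n` occurs infinitely often
  obtain ⟨G, hfreq⟩ : ∃ G, ∃ᶠ n in atTop, Gn n = G := by
    by_contra! hcon
    have h2 : ∀ᶠ n in atTop, ∀ G, Gn n ≠ G :=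
      eventually_all.2 hcon
    obtain ⟨n, hn⟩ := h2.exists
    exact hn _ rfl
  have hSG : ∀ n, Gn n = G → Sn n = S.toNFC.tw d G := by
    rintro n rfl
    funext y i
    exact hG n y i
  let F : Filter ℕ := atTop ⊓ 𝓟 {n | Gn n = G}
  have : F.NeBot := frequently_mem_iff_neBot.1 hfreq
  have hF : F ≤ atTop := inf_le_left
  have hFG : ∀ᶠ n in F, Gn n = G := mem_inf_of_right (mem_principal_self _)
  set ν := σ.map (S.toNFC.tw d G) with hν
  have hνap : ∀ A, MeasurableSet A → ν A = σ (S.toNFC.tw d G ⁻¹' A) := fun A hA =>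
    Measure.map_apply (NFC.measurable_tw G) hA
  -- the ratio of `ν(B)` to `σ(B)` is the same for all `m`-boxes in `Ω_m`, stated without division
  have hcross : ∀ m, ∀ w ∈ NFC.posVec d, ∀ w' ∈ NFC.posVec d,
      ν (S.toNFC.lev d m ⁻¹' {w}) * σ (S.toNFC.lev d m ⁻¹' {w'}) =
      ν (S.toNFC.lev d m ⁻¹' {w'}) * σ (S.toNFC.lev d m ⁻¹' {w}) := by
    intro m w hw w' hw'
    rw [hνap _ (NFC.measurableSet_lev m _), hνap _ (NFC.measurableSet_lev m _)]
    have hsub : ∀ w ∈ NFC.posVec d, S.toNFC.lev d m ⁻¹' {w} ⊆ S.toNFC.OmegaD d m := by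
      intro w hw
      rw [NFC.OmegaD_eq]
      exact preimage_mono (singleton_subset_iff.2 hw)
    have hΩ := hsub w hw
    have hΩ' := hsub w' hw'
    rcases NFC.isNBox_tw_preimage (S := S.toNFC) G m hw with ⟨h1, h2⟩ | ⟨hB1, hB2⟩
    · rw [h1, h2]; simp
    rcases NFC.isNBox_tw_preimage (S := S.toNFC) G m hw' with ⟨h1, h2⟩ | ⟨hB1', hB2'⟩
    · rw [h1, h2]; simp
    rcases eq_or_ne (σ (S.toNFC.towerD d m)) 0 with h0 | h0
    · rw [measure_mono_null hB2.subset_towerD h0, measure_mono_null hB2'.subset_towerD h0]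
      simp
    have hpos := pos_iff_ne_zero.2 h0
    obtain ⟨-, hc⟩ := hconvσn m hpos
    obtain ⟨-, hc'⟩ := hconvσ'n m hpos
    set E := S.toNFC.lev d m ⁻¹' {w}
    set E' := S.toNFC.lev d m ⁻¹' {w'}
    have hdiv : ∀ {A : Set (S.toNFC.Xd d)}, S.toNFC.IsNBox d m A →
        σ A / σ (S.toNFC.towerD d m) ≠ ⊤ := fun hA =>
      ENNReal.div_ne_top ((measure_mono hA.subset_towerD).trans_lt (hR m)).ne h0
    have t1 := ENNReal.Tendsto.mul ((hc' _ hB1).mono_left hF) (Or.inr (hdiv hB2'))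
      ((hc _ hB2').mono_left hF) (Or.inr (hdiv hB1))
    have t2 := ENNReal.Tendsto.mul ((hc' _ hB1').mono_left hF) (Or.inr (hdiv hB2))
      ((hc _ hB2).mono_left hF) (Or.inr (hdiv hB1'))
    have hlim := tendsto_nhds_unique_of_eventuallyEq t1 t2 (by
      filter_upwards [hFG, hF (hbox m)] with n hn hb
      have e1 := hb E hB2 hΩ
      have e2 := hb E' hB2' hΩ'
      rw [hSG n hn] at e1 e2
      rw [e1, e2, div_eq_mul_inv, div_eq_mul_inv, div_eq_mul_inv, div_eq_mul_inv]
      ring)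
    have hmul : ∀ a b : ℝ≥0∞, a * b = a / σ (S.toNFC.towerD d m) * (b / σ (S.toNFC.towerD d m)) *
        (σ (S.toNFC.towerD d m) * σ (S.toNFC.towerD d m)) := by
      intro a b
      conv_lhs => rw [← ENNReal.div_mul_cancel h0 (hR m).ne (b := a),
        ← ENNReal.div_mul_cancel h0 (hR m).ne (b := b)]
      ring
    rw [hmul, hlim, ← hmul]
  have hσΩ : σ (⋃ m, S.toNFC.OmegaD d m)ᶜ = 0 :=
    measure_mono_null NFC.compl_iUnion_OmegaD (measure_iUnion_null fun i => NFC.null_zero hT i)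
  have hνΩ : ν (⋃ m, S.toNFC.OmegaD d m)ᶜ = 0 := by
    refine measure_mono_null NFC.compl_iUnion_OmegaD (measure_iUnion_null fun i => ?_)
    rw [hνap _ (NFC.measurableSet_zero i)]
    -- a point whose image under the twist has a coordinate `𝟎` already has that coordinate `𝟎`
    refine measure_mono_null (fun y hy => ?_) (NFC.null_zero hT i)
    have hy' : ∀ n, (S.toNFC.tw d G y i).1 n = some 0 := hy
    by_cases h : G i
    · exfalso
      simp only [NFC.tw, h, if_true] at hy'
      have hmem : S.T (y i) ∈ ({S.zeroPt}ᶜ : Set _) := S.T_range ▸ mem_range_self (y i)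
      exact hmem (Subtype.ext (funext hy'))
    · simpa [NFC.tw, h] using hy'
  have hσfin : ∀ m, σ (S.toNFC.OmegaD d m) < ⊤ := fun m =>
    (measure_mono (NFC.OmegaD_subset_towerD m)).trans_lt (hR m)
  -- the preimage of `Ω_m` under the twist is contained in `C_m^d`
  have hνfin : ∀ m, ν (S.toNFC.OmegaD d m) < ⊤ := by
    intro m
    rw [hνap _ (NFC.measurableSet_OmegaD m)]
    refine (measure_mono fun y hy => ?_).trans_lt (hR m)
    rw [mem_preimage, NFC.OmegaD_eq, ← biUnion_preimage_singleton] at hy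
    obtain ⟨w, hw, hyw⟩ := mem_iUnion₂.1 hy
    rcases NFC.isNBox_tw_preimage (S := S.toNFC) G m hw with ⟨h1, -⟩ | ⟨hB, -⟩
    · exact absurd (h1 ▸ hyw : y ∈ (∅ : Set (S.toNFC.Xd d))) (notMem_empty y)
    · exact hB.subset_towerD hyw
  obtain ⟨m₀, hm₀⟩ : ∃ m, σ (S.toNFC.OmegaD d m) ≠ 0 := by
    by_contra! hcon
    apply hσ0
    rw [← Measure.measure_univ_eq_zero, ← union_compl_self (⋃ m, S.toNFC.OmegaD d m)]
    exact measure_union_null (measure_iUnion_null hcon) hσΩ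
  set c := ν (S.toNFC.OmegaD d m₀) / σ (S.toNFC.OmegaD d m₀) with hcdef
  have hctop : c ≠ ⊤ := ENNReal.div_ne_top (hνfin m₀).ne hm₀
  have hboxes : ∀ m, m₀ ≤ m → ∀ w ∈ NFC.posVec d,
      ν (S.toNFC.lev d m ⁻¹' {w}) = (c • σ) (S.toNFC.lev d m ⁻¹' {w}) := by
    intro m hm w hw
    obtain ⟨W, hW⟩ : ∃ W, S.toNFC.OmegaD d m₀ = S.toNFC.lev d m ⁻¹' W := by
      rw [NFC.OmegaD_eq]
      exact NFC.lev_mono hm _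
    have hW' : S.toNFC.OmegaD d m₀ = S.toNFC.lev d m ⁻¹' (W ∩ NFC.posVec d) := by
      rw [preimage_inter, ← hW, ← NFC.OmegaD_eq]
      exact (inter_eq_left.2 (NFC.OmegaD_mono hm)).symm
    have hsum := NFC.lev_measure_ext (S := S.toNFC)
      (ν₁ := ν (S.toNFC.lev d m ⁻¹' {w}) • σ) (ν₂ := σ (S.toNFC.lev d m ⁻¹' {w}) • ν)
      m (W ∩ NFC.posVec d) (by
        intro w' hw'
        simp only [Measure.smul_apply, smul_eq_mul]
        rw [hcross m w hw w' hw'.2, mul_comm])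
    rw [← hW'] at hsum
    simp only [Measure.smul_apply, smul_eq_mul] at hsum ⊢
    rw [hcdef, ← ENNReal.mul_div_right_comm, mul_comm (ν _), ← hsum,
      ENNReal.mul_div_cancel_right hm₀ (hσfin m₀).ne]
  have hprop : ν = c • σ := NFC.ext_of_boxes m₀ hboxes hνfin hνΩ (by
    rw [Measure.smul_apply, hσΩ, smul_zero])
  have hpre : ∀ A, MeasurableSet A → σ (S.toNFC.tw d G ⁻¹' A) = c * σ A := by
    intro A hA
    rw [← hνap A hA, hprop, Measure.smul_apply, smul_eq_mul]
  have hc1 : c = 1 := by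
    rcases lt_trichotomy c 1 with hlt | heq | hgt
    · exact (S.no_contraction d σ hσ0 hR hT hconull G c hlt hpre).elim
    · exact heq
    -- the complementary twist multiplies `σ` by `c⁻¹`
    · refine (S.no_contraction d σ hσ0 hR hT hconull (fun i => !G i) c⁻¹
        (ENNReal.inv_lt_one.2 hgt) fun A hA => ?_).elim
      have h1 := hpre _ (NFC.measurable_tw (fun i => !G i) hA)
      rw [← preimage_comp, (NFC.tw_comp_compl G).2, hT.measure_preimage hA.nullMeasurableSet] at h1
      rw [h1, ← mul_assoc, ENNReal.inv_mul_cancel (ne_of_gt (lt_trans one_pos hgt)) hctop, one_mul]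
  obtain ⟨n, hn⟩ := hfreq.exists
  refine ⟨S.toNFC.tw d G, ⟨G, hn ▸ hG1 n, hn ▸ hG2 n, fun y i => rfl⟩, fun A hA => ?_⟩
  rw [hpre A hA, hc1, one_mul]
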